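/- Let A and B be n×n matrices over ℝ or ℂ, and assume rank(B) ≤ r. Then ‖A − B‖_∞ ≤ σ_{r+1}(A) + [‖A − B‖₁ − σ_{r+1}^{(1)}(A)], where σ_{r+1}(A) is the (r+1)-st largest singular value of A and σ_{r+1}^{(1)}(A) = Σ_{i > r} σ_i(A). -/

import Mathlib

open Matrix MeasureTheory ProbabilityTheory
open scoped ENNReal NNReal ComplexOrder Classical

namespace PsdSketch

variable {𝕜 : Type*} [RCLike 𝕜]

/-- The four Penrose conditions characterizing the Moore–Penrose pseudoinverse. -/
def IsMoorePenrose {m k : ℕ} (M : Matrix (Fin m) (Fin k) 𝕜)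
    (X : Matrix (Fin k) (Fin m) 𝕜) : Prop :=
  M * X * M = M ∧ X * M * X = X ∧ (M * X)ᴴ = M * X ∧ (X * M)ᴴ = X * M

/-- The Moore–Penrose pseudoinverse `M†` (the unique matrix satisfying the
Penrose conditions). -/
noncomputable def pinv {m k : ℕ} (M : Matrix (Fin m) (Fin k) 𝕜) :
    Matrix (Fin k) (Fin m) 𝕜 :=
  if h : ∃ X, IsMoorePenrose M X then h.choose else 0

/-- The Nyström approximation `Â = A Ω ((Ω* A Ω)†) Ω* A`. -/
noncomputable def nystrom {n k : ℕ} (A : Matrix (Fin n) (Fin n) 𝕜)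
    (Ω : Matrix (Fin n) (Fin k) 𝕜) : Matrix (Fin n) (Fin n) 𝕜 :=
  A * Ω * pinv (Ωᴴ * A * Ω) * Ωᴴ * A

/-- The `i`-th singular value of a square matrix, 0-indexed and listed in weakly
decreasing order (so `sval M 0 = σ₁(M)`), with `sval M i = 0` for `i ≥ n`. -/
noncomputable def sval {n : ℕ} (M : Matrix (Fin n) (Fin n) 𝕜) (i : ℕ) : ℝ :=
  if h : i < n then
    Real.sqrt
      ((Matrix.posSemidef_conjTranspose_mul_self M).1.eigenvalues
        (Tuple.sort (Matrix.posSemidef_conjTranspose_mul_self M).1.eigenvalues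
          (Fin.rev ⟨i, h⟩)))
  else 0

/-- The Schatten `p`-norm: the `ℓ_p` norm of the vector of singular values. -/
noncomputable def schatten {n : ℕ} (p : ℝ≥0∞) (M : Matrix (Fin n) (Fin n) 𝕜) : ℝ :=
  if p = ∞ then sval M 0
  else (∑ i ∈ Finset.range n, sval M i ^ p.toReal) ^ (1 / p.toReal)

/-- `σ_{r+1}^{(p)}(M)`, the optimal rank-`r` approximation error of `M` in the
Schatten `p`-norm: `(Σ_{i > r} σ_i(M)^p)^{1/p}` (for `p = ∞`, `σ_{r+1}(M)`). -/
noncomputable def tailNorm {n : ℕ} (p : ℝ≥0∞) (M : Matrix (Fin n) (Fin n) 𝕜)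
    (r : ℕ) : ℝ :=
  if p = ∞ then sval M r
  else (∑ i ∈ Finset.Ico r n, sval M i ^ p.toReal) ^ (1 / p.toReal)

/-- `B` is a (simultaneous) best rank-`r` approximation of `M` with respect to every
Schatten `p`-norm; this is the defining property of an `r`-truncated SVD `⟦M⟧_r`. -/
def IsBestRankApprox {n : ℕ} (M B : Matrix (Fin n) (Fin n) 𝕜) (r : ℕ) : Prop :=
  B.rank ≤ r ∧
    ∀ p : ℝ≥0∞, 1 ≤ p → ∀ C : Matrix (Fin n) (Fin n) 𝕜, C.rank ≤ r →
      schatten p (M - B) ≤ schatten p (M - C)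

/-- `⟦M⟧_r`: a best rank-`r` approximation of `M` (an `r`-truncated SVD). -/
noncomputable def truncate {n : ℕ} (M : Matrix (Fin n) (Fin n) 𝕜) (r : ℕ) :
    Matrix (Fin n) (Fin n) 𝕜 :=
  if h : ∃ B, IsBestRankApprox M B r then h.choose else 0

/-- The distribution of an `n × k` random matrix with independent standard normal
entries (matrices identified with functions `Fin n → Fin k → ℝ`). -/
noncomputable def gaussianEnsemble (n k : ℕ) : Measure (Fin n → Fin k → ℝ) :=
  Measure.pi fun _ => Measure.pi fun _ => gaussianReal 0 1

theorem quad_form {𝕜 : Type*} [RCLike 𝕜] {n : ℕ} (M : Matrix (Fin n) (Fin n) 𝕜)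
    (x : EuclideanSpace 𝕜 (Fin n)) :
    ‖Matrix.toEuclideanLin M x‖ ^ 2 =
      ∑ j, (Matrix.posSemidef_conjTranspose_mul_self M).1.eigenvalues j *
        ‖inner 𝕜 ((Matrix.posSemidef_conjTranspose_mul_self M).1.eigenvectorBasis j) x‖ ^ 2 := by
  set H := (Matrix.posSemidef_conjTranspose_mul_self M).1 with hH
  set u := H.eigenvectorBasis with hu
  have key : ∀ j, Matrix.toEuclideanLin Mᴴ (Matrix.toEuclideanLin M (u j)) =
      (H.eigenvalues j : 𝕜) • u j := by
    intro j
    have := H.mulVec_eigenvectorBasis j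
    ext k
    have h2 := congrFun this k
    simp [Matrix.toLpLin_apply, Matrix.mulVec_mulVec] at h2 ⊢
    rw [h2, RCLike.real_smul_eq_coe_mul]
  have adj : ∀ y z : EuclideanSpace 𝕜 (Fin n),
      inner 𝕜 (Matrix.toEuclideanLin Mᴴ y) z = inner 𝕜 y (Matrix.toEuclideanLin M z) := by
    intro y z
    rw [Matrix.toEuclideanLin_conjTranspose_eq_adjoint, LinearMap.adjoint_inner_left]
  have adj2 : ∀ y z : EuclideanSpace 𝕜 (Fin n),
      inner 𝕜 y (Matrix.toEuclideanLin Mᴴ z) = inner 𝕜 (Matrix.toEuclideanLin M y) z := by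
    intro y z
    rw [Matrix.toEuclideanLin_conjTranspose_eq_adjoint, LinearMap.adjoint_inner_right]
  have h1 : ((‖Matrix.toEuclideanLin M x‖ ^ 2 : ℝ) : 𝕜) =
      ((∑ j, H.eigenvalues j * ‖inner 𝕜 (u j) x‖ ^ 2 : ℝ) : 𝕜) := by
    push_cast
    rw [← inner_self_eq_norm_sq_to_K (𝕜 := 𝕜), ← adj2, ← u.sum_inner_mul_inner]
    refine Finset.sum_congr rfl fun j _ => ?_
    rw [adj2, ← adj, key, inner_smul_left, RCLike.conj_ofReal, ← RCLike.conj_mul,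
      inner_conj_symm]
    ring
  exact_mod_cast h1

theorem sval_nonneg {𝕜 : Type*} [RCLike 𝕜] {n : ℕ} (M : Matrix (Fin n) (Fin n) 𝕜) (i : ℕ) :
    0 ≤ sval M i := by
  unfold sval
  split_ifs
  · exact Real.sqrt_nonneg _
  · exact le_rfl

theorem weyl_rank {𝕜 : Type*} [RCLike 𝕜] {n : ℕ} (A B : Matrix (Fin n) (Fin n) 𝕜)
    (r : ℕ) (hB : B.rank ≤ r) (i : ℕ) : sval A (r + i) ≤ sval (A - B) i := by
  by_cases h : r + i < n
  swap
  · rw [sval, dif_neg h]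
    exact sval_nonneg _ _
  have hi : i < n := by omega
  set HA := (Matrix.posSemidef_conjTranspose_mul_self A).1 with hHA
  set HE := (Matrix.posSemidef_conjTranspose_mul_self (A - B)).1 with hHE
  let L := Matrix.toEuclideanLin (𝕜 := 𝕜) B
  -- A: the coordinates of rank `> r+i`, i.e. sorted position `< n - (r+i+1)`
  let f : EuclideanSpace 𝕜 (Fin n) →ₗ[𝕜]
      (LinearMap.range L × (Fin (n - (r + i + 1)) → 𝕜)) × (Fin i → 𝕜) :=
    (L.rangeRestrict.prod (LinearMap.pi fun k : Fin (n - (r + i + 1)) => (innerₛₗ 𝕜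
      (HA.eigenvectorBasis (Tuple.sort HA.eigenvalues ⟨k, by omega⟩))))).prod
      (LinearMap.pi fun k : Fin i => (innerₛₗ 𝕜
      (HE.eigenvectorBasis (Tuple.sort HE.eigenvalues (Fin.rev ⟨k, by omega⟩)))))
  have hL : Module.finrank 𝕜 (LinearMap.range L) ≤ r := by
    refine le_trans (le_of_eq ?_) hB
    rw [Matrix.rank_eq_finrank_range_toLin B (PiLp.basisFun 2 𝕜 (Fin n))
      (PiLp.basisFun 2 𝕜 (Fin n)), ← Matrix.toLpLin_eq_toLin]
  have hker : LinearMap.ker f ≠ ⊥ := by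
    apply LinearMap.ker_ne_bot_of_finrank_lt
    simp only [Module.finrank_prod, Module.finrank_fin_fun, finrank_euclideanSpace,
      Fintype.card_fin]
    omega
  obtain ⟨x, hx, hx0⟩ := (Submodule.ne_bot_iff _).1 hker
  have hfx : f x = 0 := hx
  have hBx : Matrix.toEuclideanLin B x = 0 := by
    have := congrArg (fun p => (p.1.1 : EuclideanSpace 𝕜 (Fin n))) hfx
    exact this
  have hAx : ∀ k : Fin (n - (r + i + 1)), inner 𝕜 (HA.eigenvectorBasis
      (Tuple.sort HA.eigenvalues ⟨k, by omega⟩)) x = 0 := fun k =>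
    congrArg (fun p => p.1.2 k) hfx
  have hEx : ∀ k : Fin i, inner 𝕜 (HE.eigenvectorBasis
      (Tuple.sort HE.eigenvalues (Fin.rev ⟨k, by omega⟩))) x = 0 := fun k =>
    congrArg (fun p => p.2 k) hfx
  have heq : Matrix.toEuclideanLin (A - B) x = Matrix.toEuclideanLin A x := by
    rw [map_sub, LinearMap.sub_apply, hBx, sub_zero]
  set a := HA.eigenvalues (Tuple.sort HA.eigenvalues (Fin.rev ⟨r + i, h⟩)) with ha
  set e := HE.eigenvalues (Tuple.sort HE.eigenvalues (Fin.rev ⟨i, hi⟩)) with he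
  have hxpos : 0 < ‖x‖ ^ 2 := by positivity
  have lower : a * ‖x‖ ^ 2 ≤ ‖Matrix.toEuclideanLin A x‖ ^ 2 := by
    rw [quad_form, ← HA.eigenvectorBasis.sum_sq_norm_inner_right x, Finset.mul_sum]
    refine Finset.sum_le_sum fun j _ => ?_
    obtain ⟨k, rfl⟩ := (Tuple.sort HA.eigenvalues).surjective j
    by_cases hk : (k : ℕ) < n - (r + i + 1)
    · have := hAx ⟨k, hk⟩
      simp only [Fin.eta] at this
      rw [this]; simp
    · refine mul_le_mul_of_nonneg_right ?_ (by positivity)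
      refine Tuple.monotone_sort HA.eigenvalues (?_ : Fin.rev ⟨r + i, h⟩ ≤ k)
      rw [Fin.le_def, Fin.val_rev]
      simp only
      omega
  have upper : ‖Matrix.toEuclideanLin (A - B) x‖ ^ 2 ≤ e * ‖x‖ ^ 2 := by
    rw [quad_form, ← HE.eigenvectorBasis.sum_sq_norm_inner_right x, Finset.mul_sum]
    refine Finset.sum_le_sum fun j _ => ?_
    obtain ⟨k, rfl⟩ := (Tuple.sort HE.eigenvalues).surjective j
    obtain ⟨k, rfl⟩ := Fin.rev_surjective k
    by_cases hk : (k : ℕ) < i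
    · have := hEx ⟨k, hk⟩
      simp only [Fin.eta] at this
      rw [this]; simp
    · refine mul_le_mul_of_nonneg_right ?_ (by positivity)
      refine Tuple.monotone_sort HE.eigenvalues (?_ : Fin.rev k ≤ Fin.rev ⟨i, hi⟩)
      rw [Fin.rev_le_rev, Fin.le_def]
      simp only
      omega
  rw [heq] at upper
  rw [sval, sval, dif_pos h, dif_pos hi]
  exact Real.sqrt_le_sqrt (le_of_mul_le_mul_right (lower.trans upper) hxpos)

theorem stmt10 {𝕜 : Type*} [RCLike 𝕜] {n : ℕ} (A B : Matrix (Fin n) (Fin n) 𝕜)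
    (r : ℕ) (hB : B.rank ≤ r) :
    schatten ⊤ (A - B)
      ≤ sval A r + (schatten 1 (A - B) - ∑ i ∈ Finset.Ico r n, sval A i) := by
  have hs1 : schatten 1 (A - B) = ∑ i ∈ Finset.range n, sval (A - B) i := by
    simp [schatten]
  have hsT : schatten ⊤ (A - B) = sval (A - B) 0 := by simp [schatten]
  rw [hs1, hsT]
  have hzero : ∀ (M : Matrix (Fin n) (Fin n) 𝕜) (i : ℕ), n ≤ i → sval M i = 0 := by
    intro M i hi
    rw [sval, dif_neg (by omega)]
  have hE : ∑ i ∈ Finset.range n, sval (A - B) i =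
      sval (A - B) 0 + ∑ i ∈ Finset.Ico 1 n, sval (A - B) i := by
    rcases Nat.eq_zero_or_pos n with h0 | h0
    · simp [h0, hzero (A - B) 0 (by omega)]
    · rw [Finset.range_eq_Ico, Finset.sum_eq_sum_Ico_succ_bot h0]
  have hA : ∑ i ∈ Finset.Ico r n, sval A i =
      sval A r + ∑ i ∈ Finset.Ico (r + 1) n, sval A i := by
    rcases lt_or_ge r n with h0 | h0
    · rw [Finset.sum_eq_sum_Ico_succ_bot h0]
    · rw [Finset.Ico_eq_empty (by omega), Finset.Ico_eq_empty (by omega), hzero A r h0]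
      simp
  have hle : ∑ i ∈ Finset.Ico (r + 1) n, sval A i ≤ ∑ i ∈ Finset.Ico 1 n, sval (A - B) i := by
    calc ∑ i ∈ Finset.Ico (r + 1) n, sval A i
        ≤ ∑ i ∈ Finset.Ico (1 + r) (n + r), sval A i := by
          refine Finset.sum_le_sum_of_subset_of_nonneg ?_ fun i _ _ => sval_nonneg A i
          intro i hi
          simp only [Finset.mem_Ico] at hi ⊢
          omega
      _ = ∑ i ∈ Finset.Ico 1 n, sval A (r + i) := by
          rw [Finset.sum_Ico_add]
      _ ≤ _ := Finset.sum_le_sum fun i _ => weyl_rank A B r hB i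
  linarith

end PsdSketch
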